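/- There exists a 2-uniform unit vector in the 6-partite space C^2 ⊗ (C^3)^{⊗5}, i.e., a unit vector ψ ∈ C^2 ⊗ C^3 ⊗ C^3 ⊗ C^3 ⊗ C^3 ⊗ C^3 all of whose reductions to any 2 of the 6 parties are maximally mixed. -/

import Mathlib

/-!
Common definitions: multipartite systems with parties indexed by a finite type `ι`,
local dimensions `d : ι → ℕ`, vectors as functions on the configuration space,
partial traces, and `r`-uniform states and subspaces.
-/

open scoped ComplexConjugate Matrix

namespace RUnif

variable {ι : Type} [Fintype ι] [DecidableEq ι]

/-- Configuration space (computational basis index set) of the multipartite system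
`ℂ^{d i₁} ⊗ ... ⊗ ℂ^{d iₙ}`. -/
abbrev Cfg (d : ι → ℕ) : Type := ∀ i, Fin (d i)

/-- The multipartite Hilbert space `ℂ^{d i₁} ⊗ ... ⊗ ℂ^{d iₙ}`, realized as functions
on the configuration space. -/
abbrev H (d : ι → ℕ) : Type := Cfg d → ℂ

/-- The standard hermitian inner product `⟪φ, ψ⟫`. -/
noncomputable def dotc (d : ι → ℕ) (φ ψ : H d) : ℂ :=
  ∑ x, conj (φ x) * ψ x

/-- The rank-one operator `|ψ⟩⟨φ|` as a matrix. -/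
noncomputable def dyad (d : ι → ℕ) (ψ φ : H d) : Matrix (Cfg d) (Cfg d) ℂ :=
  Matrix.of fun x y => ψ x * conj (φ y)

/-- Configurations of the parties inside `S`. -/
abbrev SubCfg (d : ι → ℕ) (S : Finset ι) : Type := ∀ i : S, Fin (d i.1)

/-- Configurations of the parties outside `S`. -/
abbrev CoCfg (d : ι → ℕ) (S : Finset ι) : Type := ∀ i : {j : ι // j ∉ S}, Fin (d i.1)

/-- Merge a configuration of the parties in `S` with one of the parties outside `S`. -/
def merge (d : ι → ℕ) (S : Finset ι) (a : SubCfg d S) (c : CoCfg d S) : Cfg d :=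
  fun i => if h : i ∈ S then a ⟨i, h⟩ else c ⟨i, h⟩

/-- Partial trace over the parties *outside* `S` (i.e. `Tr_{Sᶜ}`), leaving an operator
on the parties in `S`. -/
noncomputable def ptr (d : ι → ℕ) (S : Finset ι) (M : Matrix (Cfg d) (Cfg d) ℂ) :
    Matrix (SubCfg d S) (SubCfg d S) ℂ :=
  Matrix.of fun a b => ∑ c : CoCfg d S, M (merge d S a c) (merge d S b c)

/-- The maximally mixed state `(1/d_S) I_S` on the parties in `S`. -/
noncomputable def unifMix (d : ι → ℕ) (S : Finset ι) :
    Matrix (SubCfg d S) (SubCfg d S) ℂ :=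
  (∏ i : S, (d i.1 : ℂ))⁻¹ • 1

/-- `ψ` is a unit vector. -/
def IsUnitVec (d : ι → ℕ) (ψ : H d) : Prop := dotc d ψ ψ = 1

/-- `ψ` is `r`-uniform: every reduction to `r` parties is maximally mixed. -/
def IsUniform (d : ι → ℕ) (r : ℕ) (ψ : H d) : Prop :=
  ∀ S : Finset ι, S.card = r → ptr d S (dyad d ψ ψ) = unifMix d S

/-- A subspace is `r`-uniform if every unit vector in it is an `r`-uniform state. -/
def IsUniformSubspace (d : ι → ℕ) (r : ℕ) (W : Submodule ℂ (H d)) : Prop :=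
  ∀ ψ ∈ W, IsUnitVec d ψ → IsUniform d r ψ

end RUnif

namespace RUnif

/-- Local dimensions. -/
abbrev dd : Fin 6 → ℕ := ![2, 3, 3, 3, 3, 3]

/-- Configuration read in `ZMod 3`. -/
def zc (x : Cfg dd) : Fin 6 → ZMod 3 := fun i => ((x i).val : ZMod 3)

/-- Quadratic form of the wheel graph with hub `0`. -/
def qf (z : Fin 6 → ZMod 3) : ZMod 3 :=
  z 0 * (z 1 + z 2 + z 3 + z 4 + z 5)
    + (z 1 * z 2 + z 2 * z 3 + z 3 * z 4 + z 4 * z 5 + z 5 * z 1)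

/-- Adjacency matrix of the wheel. -/
def adj : Fin 6 → Fin 6 → ZMod 3 :=
  ![![0, 1, 1, 1, 1, 1], ![1, 0, 1, 0, 0, 1], ![1, 1, 0, 1, 0, 0],
    ![1, 0, 1, 0, 1, 0], ![1, 0, 0, 1, 0, 1], ![1, 1, 0, 0, 1, 0]]

lemma qf_shift (z : Fin 6 → ZMod 3) (j : Fin 6) :
    qf (z + Pi.single j 1) = qf z + ∑ i, adj j i * z i := by
  fin_cases j <;> simp [qf, adj, Fin.sum_univ_succ] <;> ring

set_option maxRecDepth 100000 in
lemma adj_rank : ∀ u v : Fin 6, u ≠ v → ∀ α β : ZMod 3, (α ≠ 0 ∨ β ≠ 0) →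
    ∃ j, j ≠ u ∧ j ≠ v ∧ j ≠ 0 ∧ adj j u * α + adj j v * β ≠ 0 := by
  unfold adj
  decide

lemma finRotate_cast (j : Fin 6) (hj : j ≠ 0) (t : Fin (dd j)) :
    (((finRotate (dd j) t).val : ℕ) : ZMod 3) = (t.val : ZMod 3) + 1 := by
  revert t
  fin_cases j
  · exact absurd rfl hj
  all_goals
    change ∀ t : Fin 3, (((finRotate 3 t).val : ℕ) : ZMod 3) = (t.val : ZMod 3) + 1
    decide

lemma cast_inj (j : Fin 6) (s t : Fin (dd j)) (h : (s.val : ZMod 3) = (t.val : ZMod 3)) :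
    s = t := by
  revert s t
  fin_cases j
  · change ∀ s t : Fin 2, (s.val : ZMod 3) = (t.val : ZMod 3) → s = t
    decide
  all_goals
    change ∀ s t : Fin 3, (s.val : ZMod 3) = (t.val : ZMod 3) → s = t
    decide

/-- Rotate the `j`-th coordinate. -/
def rot (S : Finset (Fin 6)) (j : Fin 6) : CoCfg dd S ≃ CoCfg dd S :=
  Equiv.piCongrRight fun k => if k.1 = j then finRotate _ else Equiv.refl _

lemma zc_rot (S : Finset (Fin 6)) (j : Fin 6) (hj : j ∉ S) (hj0 : j ≠ 0)
    (a : SubCfg dd S) (c : CoCfg dd S) :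
    zc (merge dd S a (rot S j c)) = zc (merge dd S a c) + Pi.single j 1 := by
  funext i
  by_cases hi : i ∈ S
  · have : i ≠ j := fun h => hj (h ▸ hi)
    simp [zc, merge, hi, this]
  · by_cases hij : i = j
    · subst hij
      have := finRotate_cast i hj0 (c ⟨i, hi⟩)
      simpa [zc, merge, hi, rot, -finRotate_apply, -finRotate_succ_apply] using this
    · simp [zc, merge, hi, rot, hij]

/-- The (unnormalised) amplitudes. -/
noncomputable def amp (x : Cfg dd) : ℂ := ZMod.stdAddChar (N := 3) (qf (zc x))

lemma amp_mul_conj (x y : Cfg dd) :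
    amp x * conj (amp y) = ZMod.stdAddChar (N := 3) (qf (zc x) - qf (zc y)) := by
  rw [amp, amp, ← AddChar.map_neg_eq_conj, ← AddChar.map_add_eq_mul, sub_eq_add_neg]

lemma off_diag (S : Finset (Fin 6)) (hS : S.card = 2) (a b : SubCfg dd S) (hab : a ≠ b) :
    ∑ c : CoCfg dd S, amp (merge dd S a c) * conj (amp (merge dd S b c)) = 0 := by
  obtain ⟨u, v, huv, hSdef⟩ := Finset.card_eq_two.mp hS
  have hsum : ∀ f : Fin 6 → ZMod 3, ∑ i ∈ S, f i = f u + f v := by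
    intro f
    rw [hSdef, Finset.sum_pair huv]
  have hu : u ∈ S := by simp [hSdef]
  have hv : v ∈ S := by simp [hSdef]
  set α : ZMod 3 := ((a ⟨u, hu⟩).val : ZMod 3) - ((b ⟨u, hu⟩).val : ZMod 3) with hα
  set β : ZMod 3 := ((a ⟨v, hv⟩).val : ZMod 3) - ((b ⟨v, hv⟩).val : ZMod 3) with hβ
  have hne : α ≠ 0 ∨ β ≠ 0 := by
    by_contra! h
    apply hab
    funext ⟨i, hi⟩
    have hi' : i = u ∨ i = v := by simpa [hSdef] using hi
    rcases hi' with rfl | rfl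
    · exact cast_inj _ _ _ (sub_eq_zero.mp h.1)
    · exact cast_inj _ _ _ (sub_eq_zero.mp h.2)
  obtain ⟨j, hju, hjv, hj0, hj⟩ := adj_rank u v huv α β hne
  have hjS : j ∉ S := by simp [hSdef, hju, hjv]
  simp only [amp_mul_conj]
  set χ := ZMod.stdAddChar (N := 3) with hχ
  set t := adj j u * α + adj j v * β with ht
  have key : ∀ c : CoCfg dd S,
      χ (qf (zc (merge dd S a (rot S j c))) - qf (zc (merge dd S b (rot S j c))))
      = χ t * χ (qf (zc (merge dd S a c)) - qf (zc (merge dd S b c))) := by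
    intro c
    rw [← AddChar.map_add_eq_mul, zc_rot S j hjS hj0, zc_rot S j hjS hj0, qf_shift, qf_shift]
    congr 1
    have : ∑ i, adj j i * zc (merge dd S a c) i - ∑ i, adj j i * zc (merge dd S b c) i = t := by
      rw [← Finset.sum_sub_distrib, ← Finset.sum_subset (Finset.subset_univ S), hsum]
      · simp only [zc, merge, hu, hv, dif_pos, ht, hα, hβ]
        ring
      · intro i _ hi
        simp [zc, merge, hi]
    rw [← this]
    ring
  have h1 : ∑ c : CoCfg dd S, χ (qf (zc (merge dd S a c)) - qf (zc (merge dd S b c)))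
      = χ t * ∑ c : CoCfg dd S, χ (qf (zc (merge dd S a c)) - qf (zc (merge dd S b c))) := by
    rw [Finset.mul_sum, ← (rot S j).sum_comp]
    exact Finset.sum_congr rfl fun c _ => key c
  have h2 : χ t ≠ 1 := by
    intro h
    apply hj
    apply ZMod.injective_stdAddChar (N := 3)
    rw [AddChar.map_zero_eq_one]
    exact h
  generalize ∑ c : CoCfg dd S, χ (qf (zc (merge dd S a c)) - qf (zc (merge dd S b c))) = X at h1 ⊢
  have h3 : (χ t - 1) * X = 0 := by rw [sub_mul, one_mul, ← h1, sub_self]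
  exact (mul_eq_zero.mp h3).resolve_left (sub_ne_zero.mpr h2)

/-- The normalised state. -/
noncomputable def psi : H dd := fun x => ((Real.sqrt 486)⁻¹ : ℝ) * amp x

lemma psi_mul_conj (x y : Cfg dd) :
    psi x * conj (psi y) = (486 : ℂ)⁻¹ * (amp x * conj (amp y)) := by
  have : (((Real.sqrt 486)⁻¹ : ℝ) : ℂ) * (((Real.sqrt 486)⁻¹ : ℝ) : ℂ) = (486 : ℂ)⁻¹ := by
    rw [← Complex.ofReal_mul, ← mul_inv, Real.mul_self_sqrt (by norm_num)]
    norm_num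
  rw [psi, psi, map_mul, Complex.conj_ofReal, ← this]
  ring

lemma amp_self (x : Cfg dd) : amp x * conj (amp x) = 1 := by
  rw [amp_mul_conj, sub_self, AddChar.map_zero_eq_one]

lemma card_co (S : Finset (Fin 6)) :
    (Fintype.card (CoCfg dd S) : ℂ) * ∏ i : S, (dd i.1 : ℂ) = 486 := by
  have h : (∏ i : {j // j ∈ S}, dd i.1) * (∏ i : {j // j ∉ S}, dd i.1) = 486 := by
    have h1 := Fintype.prod_subtype_mul_prod_subtype (fun i => i ∈ S) dd
    have h2 : ∏ i, dd i = 486 := by decide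
    rw [h2] at h1
    convert h1
  rw [Fintype.card_pi]
  simp only [Fintype.card_fin]
  rw [mul_comm]
  exact_mod_cast h

end RUnif

open RUnif in
/-- There exists a 2-uniform unit vector in `ℂ² ⊗ (ℂ³)^{⊗5}`. -/
theorem statement13 :
    ∃ ψ : H ![2, 3, 3, 3, 3, 3],
      IsUnitVec ![2, 3, 3, 3, 3, 3] ψ ∧ IsUniform ![2, 3, 3, 3, 3, 3] 2 ψ := by
  refine ⟨psi, ?_, ?_⟩
  · change ∑ x : Cfg dd, conj (psi x) * psi x = 1
    have hc : Fintype.card (Cfg dd) = 486 := by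
      rw [Fintype.card_pi]
      simp only [Fintype.card_fin]
      decide
    simp only [mul_comm (conj _), psi_mul_conj, amp_self]
    rw [Finset.sum_const, Finset.card_univ, hc]
    norm_num
  · intro S hS
    change ptr dd S (dyad dd psi psi) = unifMix dd S
    ext a b
    change ∑ c : CoCfg dd S, psi (merge dd S a c) * conj (psi (merge dd S b c)) =
      (∏ i : S, (dd i.1 : ℂ))⁻¹ * (1 : Matrix (SubCfg dd S) (SubCfg dd S) ℂ) a b
    simp only [psi_mul_conj]
    rw [← Finset.mul_sum]
    by_cases hab : a = b
    · subst hab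
      have h := card_co S
      have hP : (∏ i : S, (dd i.1 : ℂ)) ≠ 0 := by
        intro h0
        rw [h0, mul_zero] at h
        norm_num at h
      simp only [amp_self]
      rw [Finset.sum_const, Finset.card_univ, Matrix.one_apply_eq, nsmul_eq_mul, mul_one, mul_one,
        ← h, mul_inv]
      have hC : (Fintype.card (CoCfg dd S) : ℂ) ≠ 0 := by
        intro h0
        rw [h0, zero_mul] at h
        norm_num at h
      field_simp
    · rw [off_diag S hS a b hab, Matrix.one_apply_ne hab, mul_zero, mul_zero]
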